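/- If a 3-connected graph G contains K5+ or K33+ as a minor, then G contains at least one of EX1, EX2, EX8 as a minor. Consequently, every 3-connected graph that is {EX1, EX2, EX8}-free is {K5+, K33+}-free. -/

import Mathlib

open SimpleGraph

/-- `H` is a minor of `G` (branch-set / model definition). -/
def IsMinor {W V : Type*} (H : SimpleGraph W) (G : SimpleGraph V) : Prop :=
  ∃ B : W → Set V,
    (∀ w, (B w).Nonempty) ∧
    (∀ w, (G.induce (B w)).Connected) ∧
    (Pairwise fun w₁ w₂ => Disjoint (B w₁) (B w₂)) ∧
    (∀ ⦃w₁ w₂ : W⦄, H.Adj w₁ w₂ → ∃ v₁ ∈ B w₁, ∃ v₂ ∈ B w₂, G.Adj v₁ v₂)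

def K5 : SimpleGraph (Fin 5) := ⊤

def K33 : SimpleGraph (Fin 3 ⊕ Fin 3) := completeBipartiteGraph (Fin 3) (Fin 3)

/-- A graph is planar iff it has neither a `K₅` nor a `K₃,₃` minor (Wagner's theorem). -/
def Planar {V : Type*} (G : SimpleGraph V) : Prop := ¬ IsMinor K5 G ∧ ¬ IsMinor K33 G

/-- `G / uw`: contract the edge `uw`, merging `w` into `u` (the vertex `w` becomes isolated). -/
def contractEdge {V : Type*} (G : SimpleGraph V) (u w : V) : SimpleGraph V :=
  SimpleGraph.fromRel fun a b =>
    a ≠ w ∧ b ≠ w ∧ (G.Adj a b ∨ (a = u ∧ G.Adj w b) ∨ (b = u ∧ G.Adj a w))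

/-- A nonplanar graph is almost-planar if for every edge, deletion or contraction is planar. -/
def AlmostPlanar {V : Type*} (G : SimpleGraph V) : Prop :=
  ¬ Planar G ∧ ∀ ⦃u v : V⦄, G.Adj u v →
    (Planar (G.deleteEdges {s(u, v)}) ∨ Planar (contractEdge G u v))

/-- `G` is `k`-connected: more than `k` vertices and deleting fewer than `k` vertices
leaves a connected graph. -/
def KConnected {V : Type*} (G : SimpleGraph V) (k : ℕ) : Prop :=
  k < Nat.card V ∧ ∀ s : Set V, s.ncard < k → (G.induce (sᶜ)).Connected

/-- `{G[A], G[B]}` is a `k`-separation of `G`. -/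
def IsSep {V : Type*} (G : SimpleGraph V) (k : ℕ) (A B : Set V) : Prop :=
  A ∪ B = Set.univ ∧ A ≠ Set.univ ∧ B ≠ Set.univ ∧ (A ∩ B).ncard = k ∧
  ∀ ⦃x y : V⦄, G.Adj x y → (x ∈ A ∧ y ∈ A) ∨ (x ∈ B ∧ y ∈ B)

/-- The star `K_{1,3}`, with centre `0`. -/
def K13 : SimpleGraph (Fin 4) := SimpleGraph.fromRel fun a _ => a = 0

def InternallyFourConnected {V : Type*} (G : SimpleGraph V) : Prop :=
  KConnected G 3 ∧ 5 ≤ Nat.card V ∧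
  ∀ A B : Set V, IsSep G 3 A B →
    Xor' (Nonempty (G.induce A ≃g K13)) (Nonempty (G.induce B ≃g K13))

/-- The wheel `W_n`: a cycle of length `n` plus a hub (`none`) joined to all of it. -/
def wheelGraph (n : ℕ) : SimpleGraph (Option (Fin n)) :=
  SimpleGraph.fromRel fun a b =>
    match a, b with
    | some i, some j => j.val = (i.val + 1) % n
    | none, some _ => True
    | _, _ => False

def IsWheel {V : Type*} (G : SimpleGraph V) : Prop :=
  ∃ n, 3 ≤ n ∧ Nonempty (G ≃g wheelGraph n)

/-- The double wheel `DW_n`: a cycle of length `n` plus two adjacent hubs joined to all of it. -/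
def doubleWheel (n : ℕ) : SimpleGraph (Fin n ⊕ Fin 2) :=
  SimpleGraph.fromRel fun a b =>
    match a, b with
    | .inl i, .inl j => j.val = (i.val + 1) % n
    | .inl _, .inr _ => True
    | .inr _, .inr _ => True
    | _, _ => False

/-- The Möbius ladder `M_n`: a cycle of length `2n` plus all "opposite" chords. -/
def mobiusLadder (n : ℕ) : SimpleGraph (Fin (2 * n)) :=
  SimpleGraph.fromRel fun i j =>
    j.val = (i.val + 1) % (2 * n) ∨ j.val = (i.val + n) % (2 * n)

/-- `C²_m`: a cycle of length `m` plus all chords between vertices at distance two. -/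
def squareCycle (m : ℕ) : SimpleGraph (Fin m) :=
  SimpleGraph.fromRel fun i j =>
    j.val = (i.val + 1) % m ∨ j.val = (i.val + 2) % m

/-- The alternating double wheel `AW_{2n}`: a cycle of length `2n` plus two adjacent hubs,
each joined to alternating cycle vertices. -/
def altDoubleWheel (n : ℕ) : SimpleGraph (Fin (2 * n) ⊕ Fin 2) :=
  SimpleGraph.fromRel fun a b =>
    match a, b with
    | .inl i, .inl j => j.val = (i.val + 1) % (2 * n)
    | .inl i, .inr k => i.val % 2 = k.val
    | .inr _, .inr _ => True
    | _, _ => False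

/-- The class `𝒲`: three wheels glued along a common triangle `V₀`, with no other edges. -/
def InClassW {V : Type*} (G : SimpleGraph V) : Prop :=
  ∃ P : V → Fin 4,
    (P ⁻¹' {0}).ncard = 3 ∧
    (∀ x y : V, P x = 0 → P y = 0 → x ≠ y → G.Adj x y) ∧
    (∀ i : Fin 4, i ≠ 0 → IsWheel (G.induce {v | P v = 0 ∨ P v = i})) ∧
    (∀ ⦃x y : V⦄, G.Adj x y → ∃ i : Fin 4, i ≠ 0 ∧ (P x = 0 ∨ P x = i) ∧ (P y = 0 ∨ P y = i))

/-- `EX₁`: `K₃,₃` plus a vertex joined to all of one colour class. -/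
def EX1 : SimpleGraph (Option (Fin 3 ⊕ Fin 3)) :=
  SimpleGraph.fromRel fun a b =>
    match a, b with
    | some (.inl _), some (.inr _) => True
    | none, some (.inl _) => True
    | _, _ => False

/-- `EX₂`: `K₅` plus a vertex joined to three of its vertices. -/
def EX2 : SimpleGraph (Option (Fin 5)) :=
  SimpleGraph.fromRel fun a b =>
    match a, b with
    | some i, some j => i ≠ j
    | none, some j => j.val < 3
    | _, _ => False

/-- `EX₈`: `K₃,₃` plus a vertex joined to two vertices of one class and one of the other. -/
def EX8 : SimpleGraph (Option (Fin 3 ⊕ Fin 3)) :=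
  SimpleGraph.fromRel fun a b =>
    match a, b with
    | some (.inl _), some (.inr _) => True
    | none, some x => x = Sum.inl 0 ∨ x = Sum.inl 1 ∨ x = Sum.inr 0
    | _, _ => False

/-- `K₅ʰ`: subdivide the edges `01` and `02` of `K₅` and join the two subdivision vertices. -/
def K5h : SimpleGraph (Fin 5 ⊕ Fin 2) :=
  SimpleGraph.fromRel fun a b =>
    match a, b with
    | .inl i, .inl j =>
        i ≠ j ∧ ¬(i = 0 ∧ j = 1) ∧ ¬(i = 1 ∧ j = 0) ∧ ¬(i = 0 ∧ j = 2) ∧ ¬(i = 2 ∧ j = 0)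
    | .inl i, .inr k => (k = 0 ∧ (i = 0 ∨ i = 1)) ∨ (k = 1 ∧ (i = 0 ∨ i = 2))
    | .inr _, .inr _ => True
    | _, _ => False

/-- `K₃,₃ʰ`: subdivide two edges of `K₃,₃` at a common endpoint and join
the two subdivision vertices. -/
def K33h : SimpleGraph ((Fin 3 ⊕ Fin 3) ⊕ Fin 2) :=
  SimpleGraph.fromRel fun a b =>
    match a, b with
    | .inl (.inl i), .inl (.inr j) => ¬(i = 0 ∧ (j = 0 ∨ j = 1))
    | .inl (.inr j), .inl (.inl i) => ¬(i = 0 ∧ (j = 0 ∨ j = 1))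
    | .inl x, .inr k =>
        (k = 0 ∧ (x = Sum.inl 0 ∨ x = Sum.inr 0)) ∨ (k = 1 ∧ (x = Sum.inl 0 ∨ x = Sum.inr 1))
    | .inr _, .inr _ => True
    | _, _ => False

/-- `K₅⁺`: `K₅` plus a pendant vertex. -/
def K5plus : SimpleGraph (Option (Fin 5)) :=
  SimpleGraph.fromRel fun a b =>
    match a, b with
    | some i, some j => i ≠ j
    | none, some j => j = 0
    | _, _ => False

/-- `K₃,₃⁺`: `K₃,₃` plus a pendant vertex. -/
def K33plus : SimpleGraph (Option (Fin 3 ⊕ Fin 3)) :=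
  SimpleGraph.fromRel fun a b =>
    match a, b with
    | some (.inl _), some (.inr _) => True
    | none, some x => x = Sum.inl 0
    | _, _ => False

/-- `K₅ ⊕ e`: disjoint union of `K₅` and one edge. -/
def K5oplus : SimpleGraph (Fin 5 ⊕ Fin 2) :=
  SimpleGraph.fromRel fun a b =>
    match a, b with
    | .inl i, .inl j => i ≠ j
    | .inr _, .inr _ => True
    | _, _ => False

/-- `K₃,₃ ⊕ e`: disjoint union of `K₃,₃` and one edge. -/
def K33oplus : SimpleGraph ((Fin 3 ⊕ Fin 3) ⊕ Fin 2) :=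
  SimpleGraph.fromRel fun a b =>
    match a, b with
    | .inl (.inl _), .inl (.inr _) => True
    | .inr _, .inr _ => True
    | _, _ => False

/-- The triad addition of `H` at `x y z`: add a new vertex joined to `x`, `y`, `z`. -/
def triadAddition {U : Type*} (H : SimpleGraph U) (x y z : U) : SimpleGraph (Option U) :=
  SimpleGraph.fromRel fun a b =>
    match a, b with
    | some u, some v => H.Adj u v
    | none, some u => u = x ∨ u = y ∨ u = z
    | _, _ => False

def IsTriadAdditionOf {V U : Type*} (G : SimpleGraph V) (H : SimpleGraph U) : Prop :=
  ∃ x y z : U, x ≠ y ∧ y ≠ z ∧ x ≠ z ∧ Nonempty (G ≃g triadAddition H x y z)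

/-- `G` is obtained from `H` by subdividing (possibly repeatedly) edges of `H`,
all of which lie in `S`. -/
def IsSubdivisionWithin {V W : Type*} (G : SimpleGraph V) (H : SimpleGraph W)
    (S : Set (Sym2 W)) : Prop :=
  ∃ (f : W ↪ V) (p : ∀ ⦃u v : W⦄, H.Adj u v → G.Walk (f u) (f v)),
    (∀ ⦃u v : W⦄ (h : H.Adj u v), (p h).IsPath) ∧
    (∀ ⦃u v : W⦄ (h : H.Adj u v), p h.symm = (p h).reverse) ∧
    (∀ ⦃u v : W⦄ (h : H.Adj u v), s(u, v) ∉ S → (p h).length = 1) ∧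
    (∀ ⦃u v : W⦄ (h : H.Adj u v) (w : W), f w ∈ (p h).support → w = u ∨ w = v) ∧
    (∀ ⦃u v u' v' : W⦄ (h : H.Adj u v) (h' : H.Adj u' v'), s(u, v) ≠ s(u', v') →
      ∀ x : V, x ∈ (p h).support → x ∈ (p h').support → x ∈ Set.range f) ∧
    (∀ x : V, x ∈ Set.range f ∨ ∃ (u v : W) (h : H.Adj u v), x ∈ (p h).support) ∧
    (∀ e ∈ G.edgeSet, ∃ (u v : W) (h : H.Adj u v), e ∈ (p h).edges)

/-- `G` is a subdivision of `H`. -/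
def IsSubdivision {V W : Type*} (G : SimpleGraph V) (H : SimpleGraph W) : Prop :=
  IsSubdivisionWithin G H Set.univ

/-- `D(H)`: the set of edges of `H` whose deletion leaves a planar graph. -/
def Dset {U : Type*} (H : SimpleGraph U) : Set (Sym2 U) :=
  {e | e ∈ H.edgeSet ∧ Planar (H.deleteEdges {e})}

/-- `G[A]` together with all edges between vertices of `T` (`T ⊆ A` intended). -/
def deltaGraph {V : Type*} (G : SimpleGraph V) (A T : Set V) : SimpleGraph A :=
  SimpleGraph.fromRel fun a b => G.Adj a.1 b.1 ∨ (a.1 ∈ T ∧ b.1 ∈ T)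

/-- `G[A]^Y` for the separation `{G[A], G[B]}`: add a new vertex joined to `A ∩ B`. -/
def sepY {V : Type*} (G : SimpleGraph V) (A B : Set V) : SimpleGraph (Option A) :=
  SimpleGraph.fromRel fun x y =>
    match x, y with
    | some a, some b => G.Adj a.1 b.1
    | none, some a => a.1 ∈ A ∩ B
    | _, _ => False

/-- `G₂` is obtained from `G` by adding isolated vertices. -/
def AddIsolated {V₂ V : Type*} (G₂ : SimpleGraph V₂) (G : SimpleGraph V) : Prop :=
  ∃ f : V ↪ V₂, (∀ a b : V, G₂.Adj (f a) (f b) ↔ G.Adj a b) ∧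
    ∀ x : V₂, x ∉ Set.range f → ∀ y : V₂, ¬ G₂.Adj x y

/-- The set of non-isolated vertices of `G` (so `G* = G.induce (core G)`). -/
def core {V : Type*} (G : SimpleGraph V) : Set V := {v | ∃ w, G.Adj v w}

/-- `G` is obtained from `G'` by 3-summing wheels onto distinct triangles of `G'`. -/
def SumWheelsOnto {V U : Type*} (G : SimpleGraph V) (G' : SimpleGraph U) : Prop :=
  ∃ (g : U ↪ V) (k : ℕ) (Wp : Fin k → Set V) (T : Fin k → Set U),
    (∀ i, (T i).ncard = 3) ∧
    (∀ i, ∀ x ∈ T i, ∀ y ∈ T i, x ≠ y → G'.Adj x y) ∧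
    Function.Injective T ∧
    (∀ i, Disjoint (Wp i) (Set.range ⇑g)) ∧
    (Pairwise fun i j => Disjoint (Wp i) (Wp j)) ∧
    (Set.range ⇑g ∪ ⋃ i, Wp i) = Set.univ ∧
    (∀ i, IsWheel (deltaGraph G (Wp i ∪ ⇑g '' T i) (⇑g '' T i))) ∧
    (∀ a b : U, G.Adj (g a) (g b) → G'.Adj a b) ∧
    (∀ a b : U, G'.Adj a b → (G.Adj (g a) (g b) ∨ ∃ i, a ∈ T i ∧ b ∈ T i)) ∧
    (∀ ⦃x y : V⦄, G.Adj x y → (x ∈ Set.range ⇑g ∧ y ∈ Set.range ⇑g) ∨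
      ∃ i, x ∈ Wp i ∪ ⇑g '' T i ∧ y ∈ Wp i ∪ ⇑g '' T i) ∧
    (∀ i, ∀ x ∈ Wp i, ∀ ⦃y : V⦄, G.Adj x y → y ∈ Wp i ∪ ⇑g '' T i)

/-- `H` has an edge whose deletion and contraction are both nonplanar. -/
def HasBadEdge {V : Type*} (H : SimpleGraph V) : Prop :=
  ∃ u v : V, H.Adj u v ∧ ¬ Planar (H.deleteEdges {s(u, v)}) ∧ ¬ Planar (contractEdge H u v)

/-!
Let `H` be a graph of maximum degree at most four and let `G` be 3-connected. Choose a model of `H`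
in `G` beside a connected set `S` avoiding it, with `S` as large as possible. By 3-connectivity `S`
has three neighbours outside itself, which by maximality lie in the branch sets. If they lie in
three different ones, `S` is the new vertex of a triad. Otherwise two lie in one branch set `B a`,
which splits into connected halves `P` and `Q`, both adjacent to `S`.

If `P` reaches the branch sets of all neighbours of `a`, then `Q` could be added to `S`. If `P`
misses exactly one of them, `B c`, then shifting `Q` into `B c` makes `S` adjacent to both `B a` and
`B c`; so, repeating the argument, we may assume that `S` was already adjacent to some `B w` with
`w ≠ a`. For `w ≠ c` the shift now gives a triad. For `w = c` the sets `S` and `Q` realise the edge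
`ac` twice, and the same maximality argument applied to `S ∪ Q` gives a triad, as `a` and `c` have
degree at most three in `H - ac`. What remains is that both halves miss at least two neighbours of
`a`, which needs degree four. In a complete graph, two neighbours missed by each half together with
`P` and `Q` form a `K33` model that still avoids `S`; and `K33` is cubic.
-/

section ConnectedSets

variable {V : Type*} {G : SimpleGraph V} {P Q S X X' Y Y' Z : Set V} {k : ℕ}

/-- Adjacency of vertex sets: some edge of `G` joins `X` to `Y`. -/
def Touches (G : SimpleGraph V) (X Y : Set V) : Prop :=
  ∃ x ∈ X, ∃ y ∈ Y, G.Adj x y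

lemma Touches.symm (h : Touches G X Y) : Touches G Y X := by
  obtain ⟨x, hx, y, hy, hxy⟩ := h
  exact ⟨y, hy, x, hx, hxy.symm⟩

lemma Touches.mono (h : Touches G X Y) (hX : X ⊆ X') (hY : Y ⊆ Y') : Touches G X' Y' := by
  obtain ⟨x, hx, y, hy, hxy⟩ := h
  exact ⟨x, hX hx, y, hY hy, hxy⟩

lemma touches_union_left : Touches G (X ∪ Y) Z ↔ Touches G X Z ∨ Touches G Y Z := by
  simp only [Touches, Set.mem_union, or_and_right, exists_or]

lemma connected_induce_singleton (v : V) : (G.induce {v}).Connected := by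
  simp [connected_top]

lemma Touches.connected_induce_union (h : Touches G X Y) (hX : (G.induce X).Connected)
    (hY : (G.induce Y).Connected) : (G.induce (X ∪ Y)).Connected := by
  obtain ⟨x, hx, y, hy, hxy⟩ := h
  exact SimpleGraph.connected_induce_union hX.preconnected hY.preconnected hx hy hxy

lemma touches_inter_diff (hX : (G.induce X).Connected) (hin : (X ∩ S).Nonempty)
    (hout : (X \ S).Nonempty) : Touches G (X ∩ S) (X \ S) := by
  obtain ⟨s, hsX, hsS⟩ := hin
  obtain ⟨t, htX, htS⟩ := hout
  obtain ⟨p⟩ := hX.preconnected ⟨s, hsX⟩ ⟨t, htX⟩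
  obtain ⟨d, -, hfst, hsnd⟩ := p.exists_boundary_dart (Subtype.val ⁻¹' S) hsS htS
  exact ⟨d.fst, ⟨d.fst.2, hfst⟩, d.snd, ⟨d.snd.2, hsnd⟩, d.adj⟩

/-- The outer vertex boundary of `S`: the vertices outside `S` with a neighbour in `S`. -/
def outerBoundary (G : SimpleGraph V) (S : Set V) : Set V :=
  {v | v ∉ S ∧ Touches G S {v}}

lemma KConnected.finite (hG : KConnected G k) : Finite V :=
  Nat.finite_of_card_ne_zero (Nat.ne_zero_of_lt hG.1)

lemma Touches.of_mem_outerBoundary {v : V} (hv : v ∈ outerBoundary G S) (hvX : v ∈ X) :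
    Touches G S X :=
  hv.2.mono subset_rfl (Set.singleton_subset_iff.2 hvX)

lemma KConnected.le_ncard_outerBoundary (hG : KConnected G k) (hX : X.Nonempty) (hY : Y.Nonempty)
    (hdisj : Disjoint X Y) (htouch : ¬ Touches G X Y) : k ≤ (outerBoundary G X).ncard := by
  by_contra! hlt
  obtain ⟨x, hx⟩ := hX
  obtain ⟨y, hy⟩ := hY
  have hin : ((outerBoundary G X)ᶜ ∩ X).Nonempty := ⟨x, fun h => h.1 hx, hx⟩
  have hout : ((outerBoundary G X)ᶜ \ X).Nonempty :=
    ⟨y, fun h => htouch (.of_mem_outerBoundary h hy), hdisj.notMem_of_mem_right hy⟩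
  obtain ⟨u, hu, v, hv, huv⟩ := touches_inter_diff (hG.2 _ hlt) hin hout
  exact hv.1 ⟨hv.2, u, hu.2, v, rfl, huv⟩

/-- A partition of `X` into two connected sets `P` and `Q` joined by an edge. -/
structure IsSplit (G : SimpleGraph V) (X P Q : Set V) : Prop where
  union_eq : P ∪ Q = X
  disjoint : Disjoint P Q
  connected_left : (G.induce P).Connected
  connected_right : (G.induce Q).Connected
  touches : Touches G P Q

namespace IsSplit

lemma symm (h : IsSplit G X P Q) : IsSplit G X Q P where
  union_eq := by rw [Set.union_comm, h.union_eq]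
  disjoint := h.disjoint.symm
  connected_left := h.connected_right
  connected_right := h.connected_left
  touches := h.touches.symm

lemma left_subset (h : IsSplit G X P Q) : P ⊆ X :=
  h.union_eq ▸ Set.subset_union_left

lemma touches_or (h : IsSplit G X P Q) (hX : Touches G X Y) : Touches G P Y ∨ Touches G Q Y := by
  rwa [← touches_union_left, h.union_eq]

end IsSplit

lemma exists_isSplit [Finite V] (hX : (G.induce X).Connected) {x y : V} (hx : x ∈ X) (hy : y ∈ X)
    (hxy : x ≠ y) : ∃ P Q, IsSplit G X P Q ∧ x ∈ P ∧ y ∈ Q := by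
  let pairs : Set (Set V × Set V) := {R | (x ∈ R.1 ∧ y ∈ R.2 ∧ R.1 ∪ R.2 ⊆ X) ∧
    Disjoint R.1 R.2 ∧ (G.induce R.1).Connected ∧ (G.induce R.2).Connected}
  have hne : pairs.Nonempty := ⟨({x}, {y}), ⟨rfl, rfl, by grind⟩, by simpa using hxy,
    connected_induce_singleton x, connected_induce_singleton y⟩
  obtain ⟨⟨P, Q⟩, ⟨⟨hxP, hyQ, hPQX⟩, hdisj, hP, hQ⟩, hmax⟩ := pairs.toFinite.exists_maximal hne
  dsimp only at hxP hyQ hPQX hdisj hP hQ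
  have hcover : P ∪ Q = X := by
    refine hPQX.antisymm fun z hz => by_contra fun hzPQ => ?_
    obtain ⟨u, ⟨-, hu⟩, v, ⟨hvX, hv⟩, huv⟩ :=
      touches_inter_diff hX (S := P ∪ Q) ⟨x, hx, .inl hxP⟩ ⟨z, hz, hzPQ⟩
    rw [Set.mem_union, not_or] at hv
    have hv1 := connected_induce_singleton (G := G) v
    rcases hu with hu | hu
    · have hPv : Touches G P {v} := ⟨u, hu, v, rfl, huv⟩
      have := hmax (y := (P ∪ {v}, Q)) ⟨⟨.inl hxP, hyQ, by grind⟩,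
        by simpa [hdisj] using hv.2, hPv.connected_induce_union hP hv1, hQ⟩
        ⟨Set.subset_union_left, subset_rfl⟩
      exact hv.1 (this.1 (.inr rfl))
    · have hQv : Touches G Q {v} := ⟨u, hu, v, rfl, huv⟩
      have := hmax (y := (P, Q ∪ {v})) ⟨⟨hxP, .inl hyQ, by grind⟩,
        by simpa [hdisj] using hv.1, hP, hQv.connected_induce_union hQ hv1⟩
        ⟨subset_rfl, Set.subset_union_left⟩
      exact hv.2 (this.2 (.inr rfl))
  have hcross := touches_inter_diff hX ⟨x, hx, hxP⟩ ⟨y, hy, hdisj.notMem_of_mem_right hyQ⟩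
  have htouch : Touches G P Q := hcross.mono Set.inter_subset_right (by grind)
  exact ⟨P, Q, ⟨hcover, hdisj, hP, hQ, htouch⟩, hxP, hyQ⟩

end ConnectedSets

section Models

variable {V W U : Type*} {G : SimpleGraph V} {H : SimpleGraph W} {K : SimpleGraph U}
  {B : W → Set V} {A P Q S T : Set V} {a b c : W}

/-- A family of branch sets exhibiting `H` as a minor of `G`. -/
structure IsModel (H : SimpleGraph W) (G : SimpleGraph V) (B : W → Set V) : Prop where
  connected : ∀ w, (G.induce (B w)).Connected
  disjoint : Pairwise fun u w => Disjoint (B u) (B w)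
  touches : ∀ ⦃u w⦄, H.Adj u w → Touches G (B u) (B w)

lemma isMinor_iff : IsMinor H G ↔ ∃ B, IsModel H G B := by
  refine ⟨fun ⟨B, _, hconn, hdisj, htouch⟩ => ⟨B, hconn, hdisj, htouch⟩, fun ⟨B, hB⟩ => ?_⟩
  exact ⟨B, fun w => Set.nonempty_coe_sort.1 (hB.connected w).nonempty, hB.connected,
    hB.disjoint, hB.touches⟩

lemma IsModel.comp (hB : IsModel H G B) (f : K →g H) (hf : Function.Injective f) :
    IsModel K G (B ∘ f) where
  connected u := hB.connected (f u)
  disjoint _ _ huv := hB.disjoint (hf.ne huv)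
  touches _ _ huv := hB.touches (f.map_adj huv)

lemma IsMinor.of_isContained (h : IsMinor H G) (hKH : K ⊑ H) : IsMinor K G := by
  obtain ⟨B, hB⟩ := isMinor_iff.1 h
  obtain ⟨f⟩ := hKH
  exact isMinor_iff.2 ⟨B ∘ f, hB.comp f.toHom f.injective⟩

/-- A connected set of vertices outside all the branch sets `B w`. -/
structure IsSpare (G : SimpleGraph V) (B : W → Set V) (S : Set V) : Prop where
  connected : (G.induce S).Connected
  disjoint : ∀ w, Disjoint S (B w)

lemma isSpare_singleton {v : V} (hv : v ∉ ⋃ w, B w) : IsSpare G B {v} where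
  connected := connected_induce_singleton v
  disjoint := by simpa using hv

lemma IsSpare.nonempty (hS : IsSpare G B S) : S.Nonempty :=
  Set.nonempty_coe_sort.1 hS.connected.nonempty

lemma IsSpare.union (hS : IsSpare G B S) (hT : IsSpare G B T) (h : Touches G S T) :
    IsSpare G B (S ∪ T) where
  connected := h.connected_induce_union hS.connected hT.connected
  disjoint w := (hS.disjoint w).union_left (hT.disjoint w)

lemma IsModel.option_elim {K : SimpleGraph (Option W)} (hB : IsModel H G B)
    (hS : IsSpare G B S) (hsome : ∀ u w, K.Adj (some u) (some w) → H.Adj u w)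
    (hnone : ∀ w, K.Adj none (some w) → Touches G S (B w)) :
    IsModel K G (fun o => o.elim S B) where
  connected := Option.rec hS.connected hB.connected
  disjoint := by
    rintro (_ | u) (_ | w) huw
    · exact absurd rfl huw
    · exact hS.disjoint w
    · exact (hS.disjoint u).symm
    · exact hB.disjoint (by simpa using huw)
  touches := by
    rintro (_ | u) (_ | w) huw
    · exact absurd huw K.irrefl
    · exact hnone w huw
    · exact (hnone u huw.symm).symm
    · exact hB.touches (hsome u w huw)

lemma isMinor_map_some : IsMinor (H.map some) G ↔ ∃ B S, IsModel H G B ∧ IsSpare G B S := by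
  let e : H ↪g H.map some := Embedding.map .some H
  refine ⟨fun h => ?_, fun ⟨B, S, hB, hS⟩ => ?_⟩
  · obtain ⟨B, hB⟩ := isMinor_iff.1 h
    exact ⟨B ∘ some, B none, hB.comp e.toHom e.injective, hB.connected none,
      fun w => hB.disjoint (Option.some_ne_none w).symm⟩
  · refine isMinor_iff.2 ⟨_, hB.option_elim hS (fun _ _ => e.map_adj_iff.1) ?_⟩
    rintro w ⟨-, u, w, -, hu, -⟩
    exact absurd hu (Option.some_ne_none u)

@[simp] lemma triadAddition_adj_some_some {x y z u w : W} :
    (triadAddition H x y z).Adj (some u) (some w) ↔ H.Adj u w := by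
  simpa [triadAddition, H.adj_comm w u] using H.ne_of_adj

@[simp] lemma triadAddition_adj_none_some {x y z w : W} :
    (triadAddition H x y z).Adj none (some w) ↔ w = x ∨ w = y ∨ w = z := by
  simp [triadAddition]

@[simp] lemma triadAddition_adj_some_none {x y z w : W} :
    (triadAddition H x y z).Adj (some w) none ↔ w = x ∨ w = y ∨ w = z := by
  simp [triadAddition]

/-- Some triad addition of `H` at three distinct vertices is a minor of `G`. -/
def HasTriadMinor (H : SimpleGraph W) (G : SimpleGraph V) : Prop :=
  ∃ x y z : W, x ≠ y ∧ y ≠ z ∧ x ≠ z ∧ IsMinor (triadAddition H x y z) G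

lemma IsModel.hasTriadMinor (hB : IsModel H G B) (hS : IsSpare G B S) {x y z : W} (hxy : x ≠ y)
    (hyz : y ≠ z) (hxz : x ≠ z) (hx : Touches G S (B x)) (hy : Touches G S (B y))
    (hz : Touches G S (B z)) : HasTriadMinor H G := by
  refine ⟨x, y, z, hxy, hyz, hxz, isMinor_iff.2 ⟨_, hB.option_elim hS (by simp) fun w hw => ?_⟩⟩
  obtain rfl | rfl | rfl := triadAddition_adj_none_some.1 hw
  exacts [hx, hy, hz]

lemma IsModel.of_deleteEdges (hB : IsModel (H.deleteEdges {s(a, b)}) G B)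
    (hab : Touches G (B a) (B b)) : IsModel H G B where
  connected := hB.connected
  disjoint := hB.disjoint
  touches u w huw := by
    by_cases he : s(u, w) = s(a, b)
    · obtain ⟨rfl, rfl⟩ | ⟨rfl, rfl⟩ := Sym2.eq_iff.1 he
      exacts [hab, hab.symm]
    · exact hB.touches (deleteEdges_adj.2 ⟨huw, he⟩)

/-- The neighbours `w` of `a` in `H` whose branch set `B w` is not adjacent to `P`. -/
def missed (H : SimpleGraph W) (G : SimpleGraph V) (B : W → Set V) (a : W) (P : Set V) : Set W :=
  {w ∈ H.neighborSet a | ¬ Touches G P (B w)}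

lemma disjoint_missed (hB : IsModel H G B) (hPQ : IsSplit G (B a) P Q) :
    Disjoint (missed H G B a P) (missed H G B a Q) :=
  Set.disjoint_left.2 fun _ hP hQ => (hPQ.touches_or (hB.touches hP.1)).elim hP.2 hQ.2

lemma IsSplit.touches_of_mem_missed (hPQ : IsSplit G (B a) P Q) (hB : IsModel H G B)
    (hc : c ∈ missed H G B a P) : Touches G Q (B c) :=
  (hPQ.touches_or (hB.touches hc.1)).resolve_left hc.2

lemma IsSplit.touches_of_missed_eq_singleton (hPQ : IsSplit G (B a) P Q) (hB : IsModel H G B)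
    (hP : missed H G B a P = {c}) : H.Adj a c ∧ Touches G Q (B c) := by
  have hc : c ∈ missed H G B a P := hP ▸ Set.mem_singleton c
  exact ⟨hc.1, hPQ.touches_of_mem_missed hB hc⟩

lemma four_le_encard_neighborSet (hB : IsModel H G B) (hPQ : IsSplit G (B a) P Q)
    (hP : (missed H G B a P).Nontrivial) (hQ : (missed H G B a Q).Nontrivial) :
    4 ≤ (H.neighborSet a).encard := by
  have hP2 : 2 ≤ (missed H G B a P).encard :=
    Order.add_one_le_of_lt (Set.one_lt_encard_iff_nontrivial.2 hP)
  have hQ2 : 2 ≤ (missed H G B a Q).encard :=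
    Order.add_one_le_of_lt (Set.one_lt_encard_iff_nontrivial.2 hQ)
  calc (4 : ℕ∞) = 2 + 2 := rfl
    _ ≤ (missed H G B a P).encard + (missed H G B a Q).encard := add_le_add hP2 hQ2
    _ = (missed H G B a P ∪ missed H G B a Q).encard :=
      (Set.encard_union_eq (disjoint_missed hB hPQ)).symm
    _ ≤ (H.neighborSet a).encard :=
      Set.encard_le_encard (Set.union_subset (Set.sep_subset _ _) (Set.sep_subset _ _))

lemma IsSpare.exists_three_touches_or_isSplit (hG : KConnected G 3) (hW : 3 ≤ Nat.card W)
    (hB : ∀ w, (G.induce (B w)).Connected) (hS : IsSpare G B S)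
    (hbd : outerBoundary G S ⊆ ⋃ w, B w) :
    (∃ x y z, x ≠ y ∧ y ≠ z ∧ x ≠ z ∧
      Touches G S (B x) ∧ Touches G S (B y) ∧ Touches G S (B z)) ∨
    ∃ a P Q, IsSplit G (B a) P Q ∧ Touches G S P ∧ Touches G S Q := by
  have : Finite V := hG.finite
  have : Finite W := Nat.finite_of_card_ne_zero (by lia)
  by_contra! ⟨hthree, hsplit⟩
  have huntouched : ∃ c, ¬ Touches G S (B c) := by
    rw [← Set.ncard_univ] at hW
    obtain ⟨x, y, z, -, -, -, hxy, hxz, hyz⟩ := (Set.two_lt_ncard_iff Set.finite_univ).1 hW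
    by_contra! htouch
    exact hthree x y z hxy hyz hxz (htouch x) (htouch y) (htouch z)
  obtain ⟨c, hc⟩ := huntouched
  have hboundary : 3 ≤ (outerBoundary G S).ncard := hG.le_ncard_outerBoundary hS.nonempty
    (Set.nonempty_coe_sort.1 (hB c).nonempty) (hS.disjoint c) hc
  obtain ⟨u₁, u₂, u₃, hu₁, hu₂, hu₃, h₁₂, h₁₃, h₂₃⟩ :=
    (Set.two_lt_ncard_iff (Set.toFinite _)).1 hboundary
  have hinj {u v w w'} (hu : u ∈ outerBoundary G S) (hv : v ∈ outerBoundary G S) (huv : u ≠ v)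
      (huw : u ∈ B w) (hvw : v ∈ B w') : w ≠ w' := by
    rintro rfl
    obtain ⟨P, Q, hPQ, huP, hvQ⟩ := exists_isSplit (hB w) huw hvw huv
    exact hsplit w P Q hPQ (.of_mem_outerBoundary hu huP) (.of_mem_outerBoundary hv hvQ)
  obtain ⟨w₁, hw₁⟩ := Set.mem_iUnion.1 (hbd hu₁)
  obtain ⟨w₂, hw₂⟩ := Set.mem_iUnion.1 (hbd hu₂)
  obtain ⟨w₃, hw₃⟩ := Set.mem_iUnion.1 (hbd hu₃)
  exact hthree w₁ w₂ w₃ (hinj hu₁ hu₂ h₁₂ hw₁ hw₂) (hinj hu₂ hu₃ h₂₃ hw₂ hw₃)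
    (hinj hu₁ hu₃ h₁₃ hw₁ hw₃) (.of_mem_outerBoundary hu₁ hw₁) (.of_mem_outerBoundary hu₂ hw₂)
    (.of_mem_outerBoundary hu₃ hw₃)

variable [DecidableEq W]

lemma IsSpare.update (hS : IsSpare G B S) (hA : Disjoint S A) :
    IsSpare G (Function.update B a A) S where
  connected := hS.connected
  disjoint w := by
    obtain rfl | hw := eq_or_ne w a
    · simpa using hA
    · simpa [hw] using hS.disjoint w

lemma IsModel.update (hB : IsModel H G B) (hconn : (G.induce A).Connected)
    (hdisj : ∀ w ≠ a, Disjoint A (B w)) (htouch : ∀ w, H.Adj a w → Touches G A (B w)) :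
    IsModel H G (Function.update B a A) where
  connected w := by
    obtain rfl | hw := eq_or_ne w a
    · rwa [Function.update_self]
    · rw [Function.update_of_ne hw]
      exact hB.connected w
  disjoint u w huw := by
    obtain rfl | hu := eq_or_ne u a
    · simpa [huw.symm] using hdisj w huw.symm
    obtain rfl | hw := eq_or_ne w a
    · simpa [hu] using (hdisj u hu).symm
    · simpa [hu, hw] using hB.disjoint huw
  touches u w huw := by
    obtain rfl | hu := eq_or_ne u a
    · simpa [huw.ne'] using htouch w huw
    obtain rfl | hw := eq_or_ne w a
    · simpa [hu] using (htouch u huw.symm).symm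
    · simpa [hu, hw] using hB.touches huw

lemma IsModel.absorb (hB : IsModel H G B) (hQ : IsSpare G B Q) (h : Touches G Q (B a)) :
    IsModel H G (Function.update B a (B a ∪ Q)) :=
  hB.update (h.symm.connected_induce_union (hB.connected a) hQ.connected)
    (fun w hw => (hB.disjoint hw.symm).union_left (hQ.disjoint w))
    (fun _ hw => (hB.touches hw).mono Set.subset_union_left subset_rfl)

namespace IsSplit

lemma isModel_update (hPQ : IsSplit G (B a) P Q) (hB : IsModel H G B)
    (hP : missed H G B a P = ∅) : IsModel H G (Function.update B a P) :=
  hB.update hPQ.connected_left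
    (fun _ hw => (hB.disjoint hw.symm).mono_left hPQ.left_subset)
    (fun w hw => by_contra fun h => Set.eq_empty_iff_forall_notMem.1 hP w ⟨hw, h⟩)

lemma isSpare_update (hPQ : IsSplit G (B a) P Q) (hB : IsModel H G B) :
    IsSpare G (Function.update B a P) Q where
  connected := hPQ.connected_right
  disjoint w := by
    obtain rfl | hw := eq_or_ne w a
    · simpa using hPQ.disjoint.symm
    · simpa [hw] using (hB.disjoint hw.symm).mono_left hPQ.symm.left_subset

lemma isModel_deleteEdges_update (hPQ : IsSplit G (B a) P Q) (hB : IsModel H G B)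
    (hP : missed H G B a P = {c}) :
    IsModel (H.deleteEdges {s(a, c)}) G (Function.update B a P) := by
  have hdel : IsModel (H.deleteEdges {s(a, c)}) G B :=
    hB.comp (.ofLE (deleteEdges_le _)) Function.injective_id
  refine hPQ.isModel_update hdel (Set.eq_empty_of_forall_notMem fun w ⟨hw, hPw⟩ => ?_)
  rw [mem_neighborSet, deleteEdges_adj] at hw
  obtain rfl : w = c := hP.subset ⟨hw.1, hPw⟩
  exact hw.2 rfl

lemma isModel_shift (hPQ : IsSplit G (B a) P Q) (hB : IsModel H G B)
    (hP : missed H G B a P = {c}) :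
    IsModel H G (Function.update (Function.update B a P) c (B c ∪ Q)) := by
  obtain ⟨hac, hQc⟩ := hPQ.touches_of_missed_eq_singleton hB hP
  have habsorb := (hPQ.isModel_deleteEdges_update hB hP).absorb (a := c)
    (hPQ.isSpare_update hB) (by simpa [hac.ne'] using hQc)
  simp only [Function.update_of_ne hac.ne'] at habsorb
  refine habsorb.of_deleteEdges (hPQ.touches.mono ?_ ?_)
  · simp [hac.ne]
  · simp

lemma isSpare_shift (hPQ : IsSplit G (B a) P Q) (hS : IsSpare G B S) :
    IsSpare G (Function.update (Function.update B a P) c (B c ∪ Q)) S :=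
  (hS.update ((hS.disjoint a).mono_right hPQ.left_subset)).update
    ((hS.disjoint c).union_right ((hS.disjoint a).mono_right hPQ.symm.left_subset))

end IsSplit

end Models

section DoubledEdge

variable {V W : Type*} {G : SimpleGraph V} {H : SimpleGraph W} {B : W → Set V}
  {C D P Q : Set V} {a b c w : W}

lemma IsModel.hasTriadMinor_of_deleteEdges (hB : IsModel (H.deleteEdges {s(a, b)}) G B)
    (hab : a ≠ b) (hC : IsSpare G B C) (hD : IsSpare G B D) (hdisj : Disjoint C D)
    (hCD : Touches G C D) (hCa : Touches G C (B a)) (hCb : Touches G C (B b))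
    (hDb : Touches G D (B b)) (hwa : w ≠ a) (hwb : w ≠ b) (hDw : Touches G D (B w)) :
    HasTriadMinor H G := by
  classical
  have hmodel : IsModel H G (Function.update B a (B a ∪ C)) := by
    refine (hB.absorb hC hCa).of_deleteEdges ?_
    simpa [hab.symm] using hCb.mono Set.subset_union_right subset_rfl
  have hspare : IsSpare G (Function.update B a (B a ∪ C)) D :=
    hD.update ((hD.disjoint a).union_right hdisj.symm)
  refine hmodel.hasTriadMinor hspare hab hwb.symm hwa.symm ?_ ?_ ?_
  · simpa using hCD.symm.mono subset_rfl Set.subset_union_right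
  · simpa [hab.symm] using hDb
  · simpa [hwa] using hDw

/-- A model of `H` in which the edge `ab` is realised by two disjoint adjacent spare sets `C` and
`D`, each adjacent to both ends; the branch sets of `a` and `b` need not be adjacent themselves. -/
structure IsDoubledEdge (H : SimpleGraph W) (G : SimpleGraph V) (a b : W) (B : W → Set V)
    (C D : Set V) : Prop where
  adj : H.Adj a b
  model : IsModel (H.deleteEdges {s(a, b)}) G B
  spare_left : IsSpare G B C
  spare_right : IsSpare G B D
  disjoint : Disjoint C D
  touches : Touches G C D
  left_fst : Touches G C (B a)
  left_snd : Touches G C (B b)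
  right_fst : Touches G D (B a)
  right_snd : Touches G D (B b)

namespace IsDoubledEdge

lemma swap_spare (h : IsDoubledEdge H G a b B C D) : IsDoubledEdge H G a b B D C where
  adj := h.adj
  model := h.model
  spare_left := h.spare_right
  spare_right := h.spare_left
  disjoint := h.disjoint.symm
  touches := h.touches.symm
  left_fst := h.right_fst
  left_snd := h.right_snd
  right_fst := h.left_fst
  right_snd := h.left_snd

lemma swap_ends (h : IsDoubledEdge H G a b B C D) : IsDoubledEdge H G b a B C D where
  adj := h.adj.symm
  model := Sym2.eq_swap (a := a) ▸ h.model
  spare_left := h.spare_left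
  spare_right := h.spare_right
  disjoint := h.disjoint
  touches := h.touches
  left_fst := h.left_snd
  left_snd := h.left_fst
  right_fst := h.right_snd
  right_snd := h.right_fst

lemma union_left {E : Set V} (h : IsDoubledEdge H G a b B C D) (hE : IsSpare G B E)
    (hED : Disjoint E D) (hCE : Touches G C E) : IsDoubledEdge H G a b B (C ∪ E) D where
  adj := h.adj
  model := h.model
  spare_left := h.spare_left.union hE hCE
  spare_right := h.spare_right
  disjoint := h.disjoint.union_left hED
  touches := h.touches.mono Set.subset_union_left subset_rfl
  left_fst := h.left_fst.mono Set.subset_union_left subset_rfl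
  left_snd := h.left_snd.mono Set.subset_union_left subset_rfl
  right_fst := h.right_fst
  right_snd := h.right_snd

lemma isSpare_union (h : IsDoubledEdge H G a b B C D) : IsSpare G B (C ∪ D) :=
  h.spare_left.union h.spare_right h.touches

lemma hasTriadMinor_of_touches (h : IsDoubledEdge H G a b B C D) (hwa : w ≠ a) (hwb : w ≠ b)
    (hw : Touches G (C ∪ D) (B w)) : HasTriadMinor H G := by
  obtain hw | hw := touches_union_left.1 hw
  · exact h.model.hasTriadMinor_of_deleteEdges h.adj.ne h.spare_right h.spare_left
      h.disjoint.symm h.touches.symm h.right_fst h.right_snd h.left_snd hwa hwb hw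
  · exact h.model.hasTriadMinor_of_deleteEdges h.adj.ne h.spare_left h.spare_right
      h.disjoint h.touches h.left_fst h.left_snd h.right_snd hwa hwb hw

lemma update_of_missed_eq_empty [DecidableEq W] (h : IsDoubledEdge H G a b B C D)
    (hPQ : IsSplit G (B a) P Q) (hCP : Touches G C P) (hDQ : Touches G D Q)
    (hP : missed (H.deleteEdges {s(a, b)}) G B a P = ∅) :
    IsDoubledEdge H G a b (Function.update B a P) C (D ∪ Q) where
  adj := h.adj
  model := hPQ.isModel_update h.model hP
  spare_left := h.spare_left.update ((h.spare_left.disjoint a).mono_right hPQ.left_subset)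
  spare_right := (h.spare_right.update
    ((h.spare_right.disjoint a).mono_right hPQ.left_subset)).union (hPQ.isSpare_update h.model) hDQ
  disjoint := h.disjoint.union_right ((h.spare_left.disjoint a).mono_right hPQ.symm.left_subset)
  touches := h.touches.mono subset_rfl Set.subset_union_left
  left_fst := by simpa using hCP
  left_snd := by simpa [h.adj.ne'] using h.left_snd
  right_fst := by simpa using hPQ.touches.symm.mono Set.subset_union_right subset_rfl
  right_snd := by simpa [h.adj.ne'] using h.right_snd.mono Set.subset_union_left subset_rfl

lemma hasTriadMinor_of_missed_eq_singleton (h : IsDoubledEdge H G a b B C D)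
    (hPQ : IsSplit G (B a) P Q) (hCP : Touches G C P) (hDQ : Touches G D Q)
    (hP : missed (H.deleteEdges {s(a, b)}) G B a P = {c}) : HasTriadMinor H G := by
  classical
  obtain ⟨hac, -⟩ := hPQ.touches_of_missed_eq_singleton h.model hP
  have hcb : c ≠ b := fun hcb => (deleteEdges_adj.1 hac).2 (hcb ▸ rfl)
  let B' := Function.update (Function.update B a P) c (B c ∪ Q)
  have hB'a : B' a = P := by simp [B', hac.ne]
  have hB'b : B' b = B b := by simp [B', hcb.symm, h.adj.ne']
  have hB'c : B' c = B c ∪ Q := by simp [B']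
  have hB' : IsModel (H.deleteEdges {s(a, b)}) G B' := hPQ.isModel_shift h.model hP
  exact hB'.hasTriadMinor_of_deleteEdges h.adj.ne (hPQ.isSpare_shift h.spare_left)
    (hPQ.isSpare_shift h.spare_right) h.disjoint h.touches (hB'a ▸ hCP) (hB'b ▸ h.left_snd)
    (hB'b ▸ h.right_snd) hac.ne' hcb (hB'c ▸ hDQ.mono subset_rfl Set.subset_union_right)

lemma outerBoundary_subset (h : IsDoubledEdge H G a b B C D)
    (hmax : ∀ a' b' B' C' D', IsDoubledEdge H G a' b' B' C' D' → ¬ C ∪ D ⊂ C' ∪ D') :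
    outerBoundary G (C ∪ D) ⊆ ⋃ w, B w := by
  refine fun v hv => by_contra fun hvB => ?_
  have hspare := isSpare_singleton (G := G) hvB
  have hvCD := hv.1
  rw [Set.mem_union, not_or] at hvCD
  obtain hCv | hDv := touches_union_left.1 hv.2
  · refine hmax _ _ _ _ _ (h.union_left hspare (by simpa using hvCD.2) hCv) ?_
    exact ⟨by grind, fun hsub => hv.1 (hsub (.inl (.inr rfl)))⟩
  · refine hmax _ _ _ _ _ (h.swap_spare.union_left hspare (by simpa using hvCD.1) hDv) ?_
    exact ⟨by grind, fun hsub => hv.1 (hsub (.inl (.inr rfl)))⟩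

lemma hasTriadMinor_of_missed_subsingleton (h : IsDoubledEdge H G a b B C D)
    (hmax : ∀ a' b' B' C' D', IsDoubledEdge H G a' b' B' C' D' → ¬ C ∪ D ⊂ C' ∪ D')
    (hPQ : IsSplit G (B a) P Q) (hCP : Touches G C P) (hDQ : Touches G D Q)
    (hP : (missed (H.deleteEdges {s(a, b)}) G B a P).Subsingleton) : HasTriadMinor H G := by
  classical
  obtain hP | ⟨c, hP⟩ := hP.eq_empty_or_singleton
  · refine absurd ?_ (hmax _ _ _ _ _ (h.update_of_missed_eq_empty hPQ hCP hDQ hP))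
    obtain ⟨q, hq⟩ := hPQ.connected_right.nonempty
    have hqS : q ∉ C ∪ D :=
      (h.isSpare_union.disjoint a).notMem_of_mem_right (hPQ.symm.left_subset hq)
    grind
  · exact h.hasTriadMinor_of_missed_eq_singleton hPQ hCP hDQ hP

lemma not_nontrivial_missed (h : IsDoubledEdge H G a b B C D)
    (hdeg : (H.neighborSet a).encard ≤ 4) (hPQ : IsSplit G (B a) P Q)
    (hP : (missed (H.deleteEdges {s(a, b)}) G B a P).Nontrivial) :
    ¬ (missed (H.deleteEdges {s(a, b)}) G B a Q).Nontrivial := by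
  intro hQ
  have hsub : insert b ((H.deleteEdges {s(a, b)}).neighborSet a) ⊆ H.neighborSet a :=
    Set.insert_subset h.adj fun w hw => hw.1
  have hb : b ∉ (H.deleteEdges {s(a, b)}).neighborSet a :=
    fun hb => (deleteEdges_adj.1 hb).2 rfl
  have hfive : (4 : ℕ∞) + 1 ≤ 4 := calc
    (4 : ℕ∞) + 1 ≤ ((H.deleteEdges {s(a, b)}).neighborSet a).encard + 1 :=
      add_le_add_left (four_le_encard_neighborSet h.model hPQ hP hQ) 1
    _ = (insert b ((H.deleteEdges {s(a, b)}).neighborSet a)).encard :=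
      (Set.encard_insert_of_notMem hb).symm
    _ ≤ (H.neighborSet a).encard := Set.encard_le_encard hsub
    _ ≤ 4 := hdeg
  exact absurd hfive (by decide)

lemma hasTriadMinor_of_isSplit (h : IsDoubledEdge H G a b B C D)
    (hmax : ∀ a' b' B' C' D', IsDoubledEdge H G a' b' B' C' D' → ¬ C ∪ D ⊂ C' ∪ D')
    (hdeg : (H.neighborSet a).encard ≤ 4) (hPQ : IsSplit G (B a) P Q)
    (hP : Touches G (C ∪ D) P) (hQ : Touches G (C ∪ D) Q) : HasTriadMinor H G := by
  wlog hCD : Touches G C P ∧ Touches G D Q generalizing P Q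
  · have hC := (hPQ.touches_or h.left_fst.symm).imp Touches.symm Touches.symm
    have hD := (hPQ.touches_or h.right_fst.symm).imp Touches.symm Touches.symm
    obtain ⟨hCQ, hDP⟩ : Touches G C Q ∧ Touches G D P := by
      have hP' := touches_union_left.1 hP
      have hQ' := touches_union_left.1 hQ
      tauto
    exact this hPQ.symm hQ hP ⟨hCQ, hDP⟩
  obtain ⟨hCP, hDQ⟩ := hCD
  by_cases hmissed : (missed (H.deleteEdges {s(a, b)}) G B a P).Nontrivial
  · rw [Set.union_comm C D] at hmax
    exact h.swap_spare.hasTriadMinor_of_missed_subsingleton hmax hPQ.symm hDQ hCP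
      (Set.not_nontrivial_iff.1 (h.not_nontrivial_missed hdeg hPQ hmissed))
  · exact h.hasTriadMinor_of_missed_subsingleton hmax hPQ hCP hDQ
      (Set.not_nontrivial_iff.1 hmissed)

theorem hasTriadMinor (hG : KConnected G 3) (hW : 3 ≤ Nat.card W)
    (hdeg : ∀ w, (H.neighborSet w).encard ≤ 4) (h : IsDoubledEdge H G a b B C D) :
    HasTriadMinor H G := by
  have : Finite V := hG.finite
  let covered : Set (Set V) := {S | ∃ a b B C D, IsDoubledEdge H G a b B C D ∧ C ∪ D = S}
  obtain ⟨_, ⟨a, b, B, C, D, h, rfl⟩, hS⟩ :=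
    covered.toFinite.exists_maximal ⟨C ∪ D, a, b, B, C, D, h, rfl⟩
  have hmax a' b' B' C' D' (h' : IsDoubledEdge H G a' b' B' C' D') : ¬ C ∪ D ⊂ C' ∪ D' :=
    fun hlt => hlt.2 (hS ⟨a', b', B', C', D', h', rfl⟩ hlt.1)
  obtain ⟨x, y, z, hxy, hyz, hxz, hx, hy, hz⟩ | ⟨w, P, Q, hPQ, hP, hQ⟩ :=
    h.isSpare_union.exists_three_touches_or_isSplit hG hW h.model.connected
      (h.outerBoundary_subset hmax)
  · obtain ⟨w, hwa, hwb, hw⟩ : ∃ w, w ≠ a ∧ w ≠ b ∧ Touches G (C ∪ D) (B w) := by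
      by_contra! hno
      have hab w (hw : Touches G (C ∪ D) (B w)) : w = a ∨ w = b := by
        by_contra! hne
        exact hno w hne.1 hne.2 hw
      obtain rfl | rfl := hab x hx <;> obtain rfl | rfl := hab y hy <;>
        obtain rfl | rfl := hab z hz <;> contradiction
    exact h.hasTriadMinor_of_touches hwa hwb hw
  obtain rfl | hwa := eq_or_ne w a
  · exact h.hasTriadMinor_of_isSplit hmax (hdeg w) hPQ hP hQ
  obtain rfl | hwb := eq_or_ne w b
  · exact h.swap_ends.hasTriadMinor_of_isSplit hmax (hdeg w) hPQ hP hQ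
  · exact h.hasTriadMinor_of_touches hwa hwb (hP.mono subset_rfl hPQ.left_subset)

end IsDoubledEdge

end DoubledEdge

section SpareSet

variable {V W : Type*} {G : SimpleGraph V} {H : SimpleGraph W} {B : W → Set V}
  {P Q S : Set V} {a c w : W}

/-- The obstruction to enlarging or rerouting a spare set: `G` has a model of `H` beside a spare
set, one of whose branch sets splits into two halves each missing at least two neighbours. -/
def HasBalancedSplit (H : SimpleGraph W) (G : SimpleGraph V) : Prop :=
  ∃ B S a P Q, IsModel H G B ∧ IsSpare G B S ∧ IsSplit G (B a) P Q ∧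
    (missed H G B a P).Nontrivial ∧ (missed H G B a Q).Nontrivial

lemma IsSpare.outerBoundary_subset (hS : IsSpare G B S)
    (hmax : ∀ S', IsSpare G B S' → ¬ S ⊂ S') : outerBoundary G S ⊆ ⋃ w, B w := by
  refine fun v hv => by_contra fun hvB => hmax _ (hS.union (isSpare_singleton hvB) hv.2) ?_
  exact ⟨Set.subset_union_left, fun hsub => hv.1 (hsub (.inr rfl))⟩

lemma IsModel.hasTriadMinor_of_missed_eq_singleton (hB : IsModel H G B)
    (hG : KConnected G 3) (hW : 3 ≤ Nat.card W) (hdeg : ∀ w, (H.neighborSet w).encard ≤ 4)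
    (hS : IsSpare G B S) (hPQ : IsSplit G (B a) P Q) (hSP : Touches G S P) (hSQ : Touches G S Q)
    (hP : missed H G B a P = {c}) (hSw : Touches G S (B w)) (hwa : w ≠ a) :
    HasTriadMinor H G := by
  classical
  obtain ⟨hac, hQc⟩ := hPQ.touches_of_missed_eq_singleton hB hP
  have hca : c ≠ a := hac.ne'
  obtain rfl | hwc := eq_or_ne w c
  · have hdoubled : IsDoubledEdge H G a w (Function.update B a P) S Q :=
      { adj := hac
        model := hPQ.isModel_deleteEdges_update hB hP
        spare_left := hS.update ((hS.disjoint a).mono_right hPQ.left_subset)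
        spare_right := hPQ.isSpare_update hB
        disjoint := (hS.disjoint a).mono_right hPQ.symm.left_subset
        touches := hSQ
        left_fst := by simpa using hSP
        left_snd := by simpa [hca] using hSw
        right_fst := by simpa using hPQ.touches.symm
        right_snd := by simpa [hca] using hQc }
    exact hdoubled.hasTriadMinor hG hW hdeg
  · refine (hPQ.isModel_shift hB hP).hasTriadMinor (hPQ.isSpare_shift hS) hca.symm hwc.symm
      hwa.symm ?_ ?_ ?_
    · simpa [hac.ne] using hSP
    · simpa using hSQ.mono subset_rfl Set.subset_union_right
    · simpa [hwa, hwc] using hSw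

lemma IsSpare.exists_isSplit_missed_eq_singleton (hG : KConnected G 3) (hW : 3 ≤ Nat.card W)
    (hB : IsModel H G B) (hS : IsSpare G B S)
    (hmax : ∀ B' S', IsModel H G B' → IsSpare G B' S' → ¬ S ⊂ S')
    (htriad : ¬ HasTriadMinor H G) (hbal : ¬ HasBalancedSplit H G) :
    ∃ a c P Q, IsSplit G (B a) P Q ∧ Touches G S P ∧ Touches G S Q ∧
      missed H G B a P = {c} := by
  classical
  obtain ⟨x, y, z, hxy, hyz, hxz, hx, hy, hz⟩ | ⟨a, P, Q, hPQ, hSP, hSQ⟩ :=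
    hS.exists_three_touches_or_isSplit hG hW hB.connected
      (hS.outerBoundary_subset fun S' hS' => hmax B S' hB hS')
  · exact absurd (hB.hasTriadMinor hS hxy hyz hxz hx hy hz) htriad
  wlog hP : ¬ (missed H G B a P).Nontrivial generalizing P Q
  · exact this Q P hPQ.symm hSQ hSP fun hQ => hbal ⟨B, S, a, P, Q, hB, hS, hPQ, not_not.1 hP, hQ⟩
  obtain hempty | ⟨c, hc⟩ := (Set.not_nontrivial_iff.1 hP).eq_empty_or_singleton
  · have hS' : IsSpare G (Function.update B a P) (S ∪ Q) :=
      (hS.update ((hS.disjoint a).mono_right hPQ.left_subset)).union (hPQ.isSpare_update hB) hSQ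
    refine absurd ?_ (hmax _ _ (hPQ.isModel_update hB hempty) hS')
    obtain ⟨q, hq⟩ := hPQ.connected_right.nonempty
    have hqS : q ∉ S := (hS.disjoint a).notMem_of_mem_right (hPQ.symm.left_subset hq)
    exact ⟨Set.subset_union_left, fun hsub => hqS (hsub (.inr hq))⟩
  · exact ⟨a, c, P, Q, hPQ, hSP, hSQ, hc⟩

theorem hasTriadMinor_or_hasBalancedSplit (hG : KConnected G 3) (hW : 3 ≤ Nat.card W)
    (hdeg : ∀ w, (H.neighborSet w).encard ≤ 4) (h : IsMinor (H.map some) G) :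
    HasTriadMinor H G ∨ HasBalancedSplit H G := by
  classical
  by_contra! ⟨htriad, hbal⟩
  have : Finite V := hG.finite
  let spares : Set (Set V) := {S | ∃ B, IsModel H G B ∧ IsSpare G B S}
  obtain ⟨B₀, S₀, hB₀, hS₀⟩ := isMinor_map_some.1 h
  obtain ⟨S, ⟨B, hB, hS⟩, hSmax⟩ := spares.toFinite.exists_maximal ⟨S₀, B₀, hB₀, hS₀⟩
  have hmax B' S' (hB' : IsModel H G B') (hS' : IsSpare G B' S') : ¬ S ⊂ S' :=
    fun hlt => hlt.2 (hSmax ⟨B', hB', hS'⟩ hlt.1)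
  have hunique {B' a c P Q w} (hB' : IsModel H G B') (hS' : IsSpare G B' S)
      (hPQ : IsSplit G (B' a) P Q) (hSP : Touches G S P) (hSQ : Touches G S Q)
      (hc : missed H G B' a P = {c}) (hSw : Touches G S (B' w)) : w = a :=
    by_contra fun hwa => htriad <|
      hB'.hasTriadMinor_of_missed_eq_singleton hG hW hdeg hS' hPQ hSP hSQ hc hSw hwa
  obtain ⟨a, c, P, Q, hPQ, hSP, hSQ, hc⟩ :=
    hS.exists_isSplit_missed_eq_singleton hG hW hB hmax htriad hbal
  have hca : c ≠ a := (hPQ.touches_of_missed_eq_singleton hB hc).1.ne'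
  let B' := Function.update (Function.update B a P) c (B c ∪ Q)
  have hB' : IsModel H G B' := hPQ.isModel_shift hB hc
  have hS' : IsSpare G B' S := hPQ.isSpare_shift hS
  have hSa : Touches G S (B' a) := by simpa [B', hca.symm] using hSP
  have hSc : Touches G S (B' c) := by simpa [B'] using hSQ.mono subset_rfl Set.subset_union_right
  obtain ⟨a', c', P', Q', hPQ', hSP', hSQ', hc'⟩ :=
    hS'.exists_isSplit_missed_eq_singleton hG hW hB' hmax htriad hbal
  exact hca ((hunique hB' hS' hPQ' hSP' hSQ' hc' hSc).trans
    (hunique hB' hS' hPQ' hSP' hSQ' hc' hSa).symm)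

theorem hasTriadMinor_of_encard_neighborSet_le (hG : KConnected G 3) (hW : 3 ≤ Nat.card W)
    (hdeg : ∀ w, (H.neighborSet w).encard ≤ 3) (h : IsMinor (H.map some) G) :
    HasTriadMinor H G := by
  refine (hasTriadMinor_or_hasBalancedSplit hG hW
    (fun w => (hdeg w).trans (by decide)) h).resolve_right ?_
  rintro ⟨B, S, a, P, Q, hB, -, hPQ, hP, hQ⟩
  have h43 : (4 : ℕ∞) ≤ 3 := (four_le_encard_neighborSet hB hPQ hP hQ).trans (hdeg a)
  exact absurd h43 (by decide)

end SpareSet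

section TriadAdditions

variable {U W : Type*} {H : SimpleGraph W} {K : SimpleGraph U}

lemma triadAddition_isContained (f : K →g H) (hf : Function.Injective f) (x y z : U) :
    triadAddition K x y z ⊑ triadAddition H (f x) (f y) (f z) := by
  refine ⟨⟨⟨Option.map f, ?_⟩, Option.map_injective hf⟩⟩
  rintro (_ | u) (_ | w) huw
  · exact absurd huw (SimpleGraph.irrefl _)
  · simpa [hf.eq_iff] using huw
  · simpa [hf.eq_iff] using huw
  · simpa using f.map_adj (triadAddition_adj_some_some.1 huw)

lemma triadAddition_rotate (x y z : W) : triadAddition H x y z = triadAddition H y z x := by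
  ext (_ | u) (_ | w)
  · simp only [SimpleGraph.irrefl]
  · simpa using or_rotate
  · simpa using or_rotate
  · simp only [triadAddition_adj_some_some]

lemma EX1_eq_triadAddition : EX1 = triadAddition K33 (.inl 0) (.inl 1) (.inl 2) := by
  have h (i : Fin 3) : i = 0 ∨ i = 1 ∨ i = 2 := by lia
  ext (_ | u | u) (_ | w | w) <;> simp [EX1, K33, h]

lemma EX2_eq_triadAddition : EX2 = triadAddition K5 0 1 2 := by
  have h (i : Fin 5) : i.val < 3 ↔ i = 0 ∨ i = 1 ∨ i = 2 := by lia
  ext (_ | u) (_ | w) <;> simp [EX2, K5, h, eq_comm]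

lemma EX8_eq_triadAddition : EX8 = triadAddition K33 (.inl 0) (.inl 1) (.inr 0) := by
  ext (_ | u | u) (_ | w | w) <;> simp [EX8, K33]

lemma exists_perm_apply_eq {n : ℕ} {p q : Fin n → W} (hp : Function.Injective p)
    (hq : Function.Injective q) : ∃ σ : Equiv.Perm W, ∀ i, σ (p i) = q i := by
  have := Equiv.Perm.isMultiplyPretransitive W n
  obtain ⟨σ, hσ⟩ := MulAction.exists_smul_eq (Equiv.Perm W) (⟨p, hp⟩ : Fin n ↪ W) ⟨q, hq⟩
  exact ⟨σ, fun i => DFunLike.congr_fun hσ i⟩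

lemma exists_perm_apply_eq₂ {p q x y : W} (hpq : p ≠ q) (hxy : x ≠ y) :
    ∃ σ : Equiv.Perm W, σ p = x ∧ σ q = y := by
  obtain ⟨σ, hσ⟩ := exists_perm_apply_eq (p := ![p, q]) (q := ![x, y])
    (List.nodup_ofFn.1 (by simpa)) (List.nodup_ofFn.1 (by simpa))
  exact ⟨σ, hσ 0, hσ 1⟩

lemma exists_perm_apply_eq₃ {p q r x y z : W} (hpq : p ≠ q) (hqr : q ≠ r) (hpr : p ≠ r)
    (hxy : x ≠ y) (hyz : y ≠ z) (hxz : x ≠ z) :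
    ∃ σ : Equiv.Perm W, σ p = x ∧ σ q = y ∧ σ r = z := by
  obtain ⟨σ, hσ⟩ := exists_perm_apply_eq (p := ![p, q, r]) (q := ![x, y, z])
    (List.nodup_ofFn.1 (by simp [*])) (List.nodup_ofFn.1 (by simp [*]))
  exact ⟨σ, hσ 0, hσ 1, hσ 2⟩

lemma EX2_isContained {x y z : Fin 5} (hxy : x ≠ y) (hyz : y ≠ z) (hxz : x ≠ z) :
    EX2 ⊑ triadAddition K5 x y z := by
  obtain ⟨σ, rfl, rfl, rfl⟩ := exists_perm_apply_eq₃ (by decide : (0 : Fin 5) ≠ 1)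
    (by decide : (1 : Fin 5) ≠ 2) (by decide) hxy hyz hxz
  rw [EX2_eq_triadAddition]
  exact triadAddition_isContained (Iso.completeGraph σ).toHom σ.injective 0 1 2

lemma EX1_isContained {i j k : Fin 3} (hij : i ≠ j) (hjk : j ≠ k) (hik : i ≠ k) :
    EX1 ⊑ triadAddition K33 (.inl i) (.inl j) (.inl k) := by
  obtain ⟨σ, rfl, rfl, rfl⟩ := exists_perm_apply_eq₃ (by decide : (0 : Fin 3) ≠ 1)
    (by decide : (1 : Fin 3) ≠ 2) (by decide) hij hjk hik
  let e : K33 ≃g K33 := completeBipartiteGraphCongr σ (.refl (Fin 3))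
  rw [EX1_eq_triadAddition]
  exact triadAddition_isContained e.toHom e.injective (.inl 0) (.inl 1) (.inl 2)

lemma EX8_isContained {i j : Fin 3} (hij : i ≠ j) (k : Fin 3) :
    EX8 ⊑ triadAddition K33 (.inl i) (.inl j) (.inr k) := by
  obtain ⟨σ, rfl, rfl⟩ := exists_perm_apply_eq₂ (by decide : (0 : Fin 3) ≠ 1) hij
  let e : K33 ≃g K33 := completeBipartiteGraphCongr σ (.swap 0 k)
  rw [EX8_eq_triadAddition]
  simpa [e] using triadAddition_isContained e.toHom e.injective (.inl 0) (.inl 1) (.inr 0)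

lemma triadAddition_K33_swap_isContained (x y z : Fin 3 ⊕ Fin 3) :
    triadAddition K33 x.swap y.swap z.swap ⊑ triadAddition K33 x y z := by
  let swap : K33 →g K33 := ⟨Sum.swap, by rintro (_ | _) (_ | _) <;> simp [K33]⟩
  simpa [swap] using
    triadAddition_isContained swap (Equiv.sumComm _ _).injective x.swap y.swap z.swap

theorem HasTriadMinor.isMinor_EX2 {V : Type*} {G : SimpleGraph V} (h : HasTriadMinor K5 G) :
    IsMinor EX2 G := by
  obtain ⟨x, y, z, hxy, hyz, hxz, h⟩ := h
  exact h.of_isContained (EX2_isContained hxy hyz hxz)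

theorem HasTriadMinor.isMinor_EX1_or_EX8 {V : Type*} {G : SimpleGraph V}
    (h : HasTriadMinor K33 G) : IsMinor EX1 G ∨ IsMinor EX8 G := by
  obtain ⟨x, y, z, hxy, hyz, hxz, h⟩ := h
  have hswap := h.of_isContained (triadAddition_K33_swap_isContained x y z)
  rw [ne_eq] at hxy hyz hxz
  obtain i | i := x <;> obtain j | j := y <;> obtain k | k := z <;>
    simp only [Sum.inl.injEq, Sum.inr.injEq, Sum.swap] at hxy hyz hxz hswap
  · exact .inl (h.of_isContained (EX1_isContained hxy hyz hxz))
  · exact .inr (h.of_isContained (EX8_isContained hxy k))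
  · rw [← triadAddition_rotate] at h
    exact .inr (h.of_isContained (EX8_isContained (Ne.symm hxz) j))
  · rw [triadAddition_rotate] at hswap
    exact .inr (hswap.of_isContained (EX8_isContained hyz i))
  · rw [triadAddition_rotate] at h
    exact .inr (h.of_isContained (EX8_isContained hyz i))
  · rw [← triadAddition_rotate] at hswap
    exact .inr (hswap.of_isContained (EX8_isContained (Ne.symm hxz) j))
  · exact .inr (hswap.of_isContained (EX8_isContained hxy k))
  · exact .inl (hswap.of_isContained (EX1_isContained hxy hyz hxz))

end TriadAdditions

section BalancedSplits

variable {V W U : Type*} {G : SimpleGraph V} {H : SimpleGraph W} {B : W → Set V}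
  {P Q S : Set V} {a : W}

lemma IsModel.sumElim_comp {α β : Type*} (hB : IsModel ⊥ G B) {f : α → W} {g : β → W}
    (hfg : Function.Injective (Sum.elim f g)) (h : ∀ i j, Touches G (B (f i)) (B (g j))) :
    IsModel (completeBipartiteGraph α β) G (B ∘ Sum.elim f g) where
  connected i := hB.connected (Sum.elim f g i)
  disjoint _ _ hij := hB.disjoint (hfg.ne hij)
  touches := by
    rintro (i | i) (j | j) hij
    · simp at hij
    · exact h i j
    · exact (h j i).symm
    · simp at hij

lemma IsSpare.comp (hS : IsSpare G B S) (f : U → W) : IsSpare G (B ∘ f) S where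
  connected := hS.connected
  disjoint u := hS.disjoint (f u)

lemma IsSplit.isModel_bot [DecidableEq W] (hPQ : IsSplit G (B a) P Q) (hB : IsModel H G B) :
    IsModel ⊥ G (fun o : Option W => o.elim Q (Function.update B a P)) := by
  have hbot : IsModel ⊥ G B := hB.comp (.ofLE bot_le) Function.injective_id
  have hP : missed ⊥ G B a P = ∅ := by simp [missed]
  exact (hPQ.isModel_update hbot hP).option_elim (hPQ.isSpare_update hB) (by simp) (by simp)

lemma IsSplit.isSpare_option_elim [DecidableEq W] (hPQ : IsSplit G (B a) P Q)
    (hS : IsSpare G B S) :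
    IsSpare G (fun o : Option W => o.elim Q (Function.update B a P)) S where
  connected := hS.connected
  disjoint := Option.rec ((hS.disjoint a).mono_right hPQ.symm.left_subset)
    (hS.update ((hS.disjoint a).mono_right hPQ.left_subset)).disjoint

lemma HasBalancedSplit.isMinor_map_some_K33 (h : HasBalancedSplit (⊤ : SimpleGraph W) G) :
    IsMinor (K33.map some) G := by
  classical
  obtain ⟨B, S, a, P, Q, hB, hS, hPQ, ⟨c₁, h₁, c₂, h₂, h₁₂⟩, ⟨d₁, k₁, d₂, k₂, k₁₂⟩⟩ := h
  let B' : Option W → Set V := fun o => o.elim Q (Function.update B a P)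
  have hne {c R} (hc : c ∈ missed ⊤ G B a R) : a ≠ c := (⊤ : SimpleGraph W).ne_of_adj hc.1
  have hcd {c d} (hc : c ∈ missed ⊤ G B a P) (hd : d ∈ missed ⊤ G B a Q) : c ≠ d :=
    (disjoint_missed hB hPQ).ne_of_mem hc hd
  have hB'a : B' (some a) = P := by simp [B']
  have hB'c {c R} (hc : c ∈ missed ⊤ G B a R) : B' (some c) = B c := by simp [B', (hne hc).symm]
  have hinj : Function.Injective
      (Sum.elim ![some a, some c₁, some c₂] ![none, some d₁, some d₂]) := by
    refine Function.Injective.sumElim (List.nodup_ofFn.1 ?_) (List.nodup_ofFn.1 ?_) ?_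
    · simp [hne h₁, hne h₂, h₁₂]
    · simp [k₁₂]
    · simp [Fin.forall_fin_succ, hne k₁, hne k₂, hcd h₁ k₁, hcd h₁ k₂, hcd h₂ k₁, hcd h₂ k₂]
  have htouch (i j : Fin 3) : Touches G (B' (![some a, some c₁, some c₂] i))
      (B' (![none, some d₁, some d₂] j)) := by
    have ha {d} (hd : d ∈ missed ⊤ G B a Q) : Touches G (B' (some a)) (B' (some d)) := by
      rw [hB'a, hB'c hd]
      exact hPQ.symm.touches_of_mem_missed hB hd
    have hnone {c} (hc : c ∈ missed ⊤ G B a P) : Touches G (B' (some c)) (B' none) := by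
      rw [hB'c hc]
      exact (hPQ.touches_of_mem_missed hB hc).symm
    have hadj {c d} (hc : c ∈ missed ⊤ G B a P) (hd : d ∈ missed ⊤ G B a Q) :
        Touches G (B' (some c)) (B' (some d)) := by
      rw [hB'c hc, hB'c hd]
      exact hB.touches (hcd hc hd)
    have hPQ' : Touches G (B' (some a)) (B' none) := hB'a ▸ hPQ.touches
    fin_cases i <;> fin_cases j
    exacts [hPQ', ha k₁, ha k₂, hnone h₁, hadj h₁ k₁, hadj h₁ k₂, hnone h₂, hadj h₂ k₁, hadj h₂ k₂]
  exact isMinor_map_some.2 ⟨_, S, (hPQ.isModel_bot hB).sumElim_comp hinj htouch,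
    (hPQ.isSpare_option_elim hS).comp _⟩

end BalancedSplits

section ExceptionalMinors

variable {V : Type*} {G : SimpleGraph V}

lemma encard_neighborSet_K5 (w : Fin 5) : (K5.neighborSet w).encard = 4 := by
  rw [K5, neighborSet_top, ← Finset.coe_singleton, ← Finset.coe_compl,
    Set.encard_coe_eq_coe_finsetCard, Finset.card_compl]
  rfl

lemma encard_neighborSet_K33 (w : Fin 3 ⊕ Fin 3) : (K33.neighborSet w).encard = 3 := by
  obtain i | i := w
  · have : K33.neighborSet (.inl i) = Set.range Sum.inr := by ext (j | j) <;> simp [K33]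
    simp [this, ← Set.image_univ, Sum.inr_injective.encard_image]
  · have : K33.neighborSet (.inr i) = Set.range Sum.inl := by ext (j | j) <;> simp [K33]
    simp [this, ← Set.image_univ, Sum.inl_injective.encard_image]

theorem isMinor_EX1_or_EX8_of_K33 (hG : KConnected G 3) (h : IsMinor (K33.map some) G) :
    IsMinor EX1 G ∨ IsMinor EX8 G :=
  (hasTriadMinor_of_encard_neighborSet_le hG (by simp)
    (fun w => (encard_neighborSet_K33 w).le) h).isMinor_EX1_or_EX8

theorem stmt3_general (hG : KConnected G 3)
    (h : IsMinor (K5.map some) G ∨ IsMinor (K33.map some) G) :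
    IsMinor EX1 G ∨ IsMinor EX2 G ∨ IsMinor EX8 G := by
  obtain h | h := h
  · obtain h | h := hasTriadMinor_or_hasBalancedSplit hG (by simp)
      (fun w => (encard_neighborSet_K5 w).le) h
    · exact .inr (.inl h.isMinor_EX2)
    · exact (isMinor_EX1_or_EX8_of_K33 hG (h.isMinor_map_some_K33)).imp_right .inr
  · exact (isMinor_EX1_or_EX8_of_K33 hG h).imp_right .inr

lemma K5_map_some_le_K5plus : K5.map some ≤ K5plus := by
  refine (map_le_iff_le_comap .some _ _).2 fun u w huw => ?_
  simpa [K5plus, eq_comm] using huw.ne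

lemma K33_map_some_le_K33plus : K33.map some ≤ K33plus := by
  refine (map_le_iff_le_comap .some _ _).2 ?_
  rintro (u | u) (w | w) <;> simp [K33, K33plus]

end ExceptionalMinors

/-- A 3-connected graph with a K5+ or K33+ minor has an EX1, EX2, or EX8 minor;
consequently every 3-connected {EX1,EX2,EX8}-free graph is {K5+,K33+}-free. -/
theorem stmt3 :
    (∀ (V : Type) [Fintype V] (G : SimpleGraph V), KConnected G 3 →
      (IsMinor K5plus G ∨ IsMinor K33plus G) →
      (IsMinor EX1 G ∨ IsMinor EX2 G ∨ IsMinor EX8 G)) ∧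
    (∀ (V : Type) [Fintype V] (G : SimpleGraph V), KConnected G 3 →
      (¬ IsMinor EX1 G ∧ ¬ IsMinor EX2 G ∧ ¬ IsMinor EX8 G) →
      (¬ IsMinor K5plus G ∧ ¬ IsMinor K33plus G)) := by
  have main {V : Type} {G : SimpleGraph V} (hG : KConnected G 3)
      (h : IsMinor K5plus G ∨ IsMinor K33plus G) : IsMinor EX1 G ∨ IsMinor EX2 G ∨ IsMinor EX8 G :=
    stmt3_general hG (h.imp (·.of_isContained (.of_le K5_map_some_le_K5plus))
      (·.of_isContained (.of_le K33_map_some_le_K33plus)))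
  refine ⟨fun _ _ _ hG h => main hG h, fun _ _ _ hG hfree => not_or.1 fun h => ?_⟩
  exact (not_or.2 ⟨hfree.1, not_or.2 hfree.2⟩) (main hG h)
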